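/- Let (Ω, 𝒜, ℙ) be a probability space and let P be a probability measure on ℝ such that x ↦ e^{tx} is P-integrable for every t ∈ ℝ; write L(t) = ∫ e^{tx} dP(x). For each n ∈ ℕ let Q_n be a random probability measure on ℝ, i.e. a map Q_n : Ω → (probability measures on ℝ) such that ω ↦ ∫ g dQ_n(ω) is measurable for every bounded measurable g : ℝ → ℝ. Assume that for every t ∈ ℝ, x ↦ e^{tx} is Q_n(ω)-integrable for every ω, that ω ↦ ∫ e^{tx} dQ_n(ω)(x) is measurable, that ∫ e^{tx} dQ_n(ω)(x) converges in probability to L(t) as n → ∞, and additionally that P has no atoms, i.e. P({x}) = 0 for every x ∈ ℝ. Then sup_{s ∈ ℝ} |Q_n(ω)((−∞, s]) − P((−∞, s])| converges in probability to 0 as n → ∞. -/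

import Mathlib

open MeasureTheory Filter


lemma aux_polya {ι : Type*} {l : Filter ι} (f : ι → ℝ → ℝ) (F : ℝ → ℝ)
    (hm : ∀ i, Monotone (f i)) (h0 : ∀ i x, 0 ≤ f i x) (h1 : ∀ i x, f i x ≤ 1)
    (hF : Monotone F) (hFc : Continuous F) (hF0 : ∀ x, 0 ≤ F x) (hF1 : ∀ x, F x ≤ 1)
    (hbot : Tendsto F atBot (nhds 0)) (htop : Tendsto F atTop (nhds 1))
    (hpt : ∀ x, Tendsto (fun i => f i x) l (nhds (F x))) (ε : ℝ) (hε : 0 < ε) :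
    ∀ᶠ i in l, ∀ x, |f i x - F x| ≤ ε := by
  have hclose : ∀ x, ∀ᶠ i in l, |f i x - F x| < ε / 4 := by
    intro x
    have := (Metric.tendsto_nhds.1 (hpt x)) (ε / 4) (by positivity)
    simpa [Real.dist_eq] using this
  have key : ∀ᶠ i in l, ∀ x : ℝ, (x : EReal) ∈ (Set.univ : Set EReal) → |f i x - F x| ≤ ε := by
    refine IsCompact.induction_on (s := (Set.univ : Set EReal)) isCompact_univ
      (p := fun S => ∀ᶠ i in l, ∀ x : ℝ, (x : EReal) ∈ S → |f i x - F x| ≤ ε) ?_ ?_ ?_ ?_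
    · simp
    · intro s t hst ht
      filter_upwards [ht] with i hi x hx using hi x (hst hx)
    · intro s t hs ht
      filter_upwards [hs, ht] with i hi hj x hx
      exact hx.elim (hi x) (hj x)
    · intro y _
      rw [nhdsWithin_univ]
      induction y using EReal.rec with
      | bot =>
        obtain ⟨a, ha⟩ := (hbot.eventually (gt_mem_nhds (show (0:ℝ) < ε / 4 by positivity))).exists
        refine ⟨Set.Iio (a : EReal), Iio_mem_nhds (EReal.bot_lt_coe a), ?_⟩
        filter_upwards [hclose a] with i hi x hx
        have hx' : x ≤ a := by exact_mod_cast le_of_lt (Set.mem_Iio.1 hx)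
        have := hm i hx'
        have := hF hx'
        have := h0 i x
        have := hF0 x
        rw [abs_lt] at hi
        rw [abs_le]
        constructor <;> linarith
      | top =>
        obtain ⟨a, ha⟩ := (htop.eventually
          (lt_mem_nhds (show (1 - ε / 4 : ℝ) < 1 by linarith))).exists
        refine ⟨Set.Ioi (a : EReal), Ioi_mem_nhds (EReal.coe_lt_top a), ?_⟩
        filter_upwards [hclose a] with i hi x hx
        have hx' : a ≤ x := by exact_mod_cast le_of_lt (Set.mem_Ioi.1 hx)
        have := hm i hx'
        have := hF hx'
        have := h1 i x
        have := hF1 x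
        rw [abs_lt] at hi
        rw [abs_le]
        constructor <;> linarith
      | coe s =>
        obtain ⟨η, hη, H⟩ := Metric.continuousAt_iff.1 (hFc.continuousAt (x := s)) (ε / 4)
          (by positivity)
        have Ha := @H (s - η / 2) (by
          rw [Real.dist_eq, show s - η / 2 - s = -(η / 2) by ring, abs_neg,
            abs_of_pos (by positivity)]; linarith)
        have Hb := @H (s + η / 2) (by
          rw [Real.dist_eq, show s + η / 2 - s = (η / 2) by ring,
            abs_of_pos (by positivity)]; linarith)
        refine ⟨Set.Ioo ((s - η / 2 : ℝ) : EReal) ((s + η / 2 : ℝ) : EReal),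
          Ioo_mem_nhds (by rw [EReal.coe_lt_coe_iff]; linarith)
            (by rw [EReal.coe_lt_coe_iff]; linarith), ?_⟩
        filter_upwards [hclose (s - η / 2), hclose (s + η / 2)] with i hi hj x hx
        have ha : s - η / 2 ≤ x := le_of_lt (EReal.coe_lt_coe_iff.1 hx.1)
        have hb : x ≤ s + η / 2 := le_of_lt (EReal.coe_lt_coe_iff.1 hx.2)
        have := hm i ha
        have := hm i hb
        have := hF ha
        have := hF hb
        rw [Real.dist_eq, abs_lt] at Ha Hb
        rw [abs_lt] at hi hj
        rw [abs_le]
        constructor <;> linarith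
  filter_upwards [key] with i hi x using hi x (Set.mem_univ _)

lemma aux_cdf_continuous (P : Measure ℝ) [IsProbabilityMeasure P] (h : ∀ x : ℝ, P {x} = 0) :
    Continuous (ProbabilityTheory.cdf P) := by
  rw [continuous_iff_continuousAt]
  intro x
  rw [(ProbabilityTheory.monotone_cdf P).continuousAt_iff_leftLim_eq_rightLim,
    StieltjesFunction.rightLim_eq]
  have h1 : (ProbabilityTheory.cdf P).measure {x} = 0 := by
    rw [ProbabilityTheory.measure_cdf]; exact h x
  rw [StieltjesFunction.measure_singleton, ENNReal.ofReal_eq_zero] at h1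
  have := (ProbabilityTheory.monotone_cdf P).leftLim_le (le_refl x)
  linarith

lemma aux_ext (ν P : Measure ℝ) [IsProbabilityMeasure ν] [IsProbabilityMeasure P]
    (hP : ∀ t : ℝ, Integrable (fun x => Real.exp (t * x)) P)
    (h : ∀ t : ℝ, ∫ x, Real.exp (t * x) ∂P = ∫ x, Real.exp (t * x) ∂ν) : P = ν := by
  have huniv : ProbabilityTheory.integrableExpSet id P = Set.univ := by
    ext t; simpa [ProbabilityTheory.integrableExpSet] using hP t
  apply Measure.ext_of_complexMGF_id_eq
  have := ProbabilityTheory.eqOn_complexMGF_of_mgf (X := id) (Y := id) (μ := P) (μ' := ν)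
    (by ext t; simpa [ProbabilityTheory.mgf] using h t)
  ext z
  exact this (by simp [huniv])

lemma aux_min (u M : ℝ) (hM : 0 < M) : u - u ^ 2 / M ≤ min u M := by
  rw [le_min_iff]
  constructor
  · have : 0 ≤ u ^ 2 / M := by positivity
    linarith
  · rw [sub_le_iff_le_add, ← sub_le_iff_le_add', le_div_iff₀ hM]
    nlinarith [sq_nonneg (u - M), sq_nonneg u, sq_nonneg M]

/-- Passing Laplace transforms to a weak limit. -/
lemma aux_limit {ι : Type*} (U : Filter ι) [U.NeBot] (μ : ι → ProbabilityMeasure ℝ)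
    (ν : ProbabilityMeasure ℝ) (hν : Tendsto μ U (nhds ν))
    (hint : ∀ (t : ℝ) i, Integrable (fun x => Real.exp (t * x)) (μ i : Measure ℝ))
    (L : ℝ → ℝ)
    (hL : ∀ t : ℝ, Tendsto (fun i => ∫ x, Real.exp (t * x) ∂(μ i : Measure ℝ)) U (nhds (L t)))
    (t : ℝ) : ∫ x, Real.exp (t * x) ∂(ν : Measure ℝ) = L t := by
  have hcont : ∀ M : ℝ, Continuous (fun x => min (Real.exp (t * x)) M) := fun M => by fun_prop
  have hb : ∀ M : ℝ, 0 < M → ∀ x, 0 ≤ min (Real.exp (t * x)) M := fun M hM x =>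
    le_min (Real.exp_pos _).le hM.le
  have hnb : ∀ M : ℝ, 0 < M → ∀ x, ‖min (Real.exp (t * x)) M‖ ≤ M := fun M hM x => by
    rw [Real.norm_of_nonneg (hb M hM x)]; exact min_le_right _ _
  have hgi : ∀ M : ℝ, 0 < M → ∀ ρ : ProbabilityMeasure ℝ,
      Integrable (fun x => min (Real.exp (t * x)) M) (ρ : Measure ℝ) := fun M hM ρ =>
    Integrable.of_bound (hcont M).aestronglyMeasurable M (ae_of_all _ (hnb M hM))
  have hlim : ∀ M : ℝ, 0 < M → Tendsto
      (fun i => ∫ x, min (Real.exp (t * x)) M ∂(μ i : Measure ℝ)) U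
      (nhds (∫ x, min (Real.exp (t * x)) M ∂(ν : Measure ℝ))) := fun M hM =>
    (ProbabilityMeasure.tendsto_iff_forall_integral_tendsto.1 hν)
      (BoundedContinuousFunction.ofNormedAddCommGroup _ (hcont M) M (hnb M hM))
  have hup : ∀ M : ℝ, 0 < M → ∫ x, min (Real.exp (t * x)) M ∂(ν : Measure ℝ) ≤ L t :=
    fun M hM => le_of_tendsto_of_tendsto' (hlim M hM) (hL t) fun i =>
      integral_mono (hgi M hM _) (hint t i) fun x => min_le_left _ _
  have hlo : ∀ M : ℝ, 0 < M →
      L t - L (2 * t) / M ≤ ∫ x, min (Real.exp (t * x)) M ∂(ν : Measure ℝ) := by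
    intro M hM
    refine le_of_tendsto_of_tendsto' ((hL t).sub ((hL (2 * t)).div_const M)) (hlim M hM) fun i => ?_
    rw [← integral_div, ← integral_sub (hint t i) ((hint (2 * t) i).div_const M)]
    refine integral_mono ((hint t i).sub ((hint (2 * t) i).div_const M)) (hgi M hM _) fun x => ?_
    have := aux_min (Real.exp (t * x)) M hM
    have h2 : Real.exp (2 * t * x) = Real.exp (t * x) ^ 2 := by
      rw [← Real.exp_nat_mul]; congr 1; push_cast; ring
    simpa [h2] using this
  have hM : ∀ n : ℕ, (0 : ℝ) < (n : ℝ) + 1 := fun n => by positivity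
  have hto : Tendsto (fun n : ℕ => ∫ x, min (Real.exp (t * x)) ((n : ℝ) + 1) ∂(ν : Measure ℝ))
      atTop (nhds (L t)) := by
    refine tendsto_of_tendsto_of_tendsto_of_le_of_le
      (g := fun n : ℕ => L t - L (2 * t) / ((n : ℝ) + 1)) ?_ tendsto_const_nhds
      (fun n => hlo _ (hM n)) (fun n => hup _ (hM n))
    have : Tendsto (fun n : ℕ => L (2 * t) / ((n : ℝ) + 1)) atTop (nhds 0) :=
      tendsto_const_nhds.div_atTop
        (tendsto_atTop_add_const_right _ _ tendsto_natCast_atTop_atTop)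
    simpa using tendsto_const_nhds.sub this
  have hL0 : 0 ≤ L t := (integral_nonneg (hb 1 one_pos)).trans (hup 1 one_pos)
  have hl : Tendsto (fun n : ℕ => ∫⁻ x, ENNReal.ofReal (min (Real.exp (t * x)) ((n : ℝ) + 1))
      ∂(ν : Measure ℝ)) atTop (nhds (∫⁻ x, ENNReal.ofReal (Real.exp (t * x)) ∂(ν : Measure ℝ))) := by
    refine lintegral_tendsto_of_tendsto_of_monotone
      (fun n => (hcont _).measurable.ennreal_ofReal.aemeasurable) ?_ ?_
    · refine ae_of_all _ fun x m n hmn => ?_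
      refine ENNReal.ofReal_le_ofReal (min_le_min_left _ ?_)
      have : (m : ℝ) ≤ n := by exact_mod_cast hmn
      linarith
    · refine ae_of_all _ fun x => tendsto_const_nhds.congr' ?_
      obtain ⟨N, hN⟩ := exists_nat_gt (Real.exp (t * x))
      filter_upwards [eventually_ge_atTop N] with n hn
      have : (N : ℝ) ≤ n := by exact_mod_cast hn
      rw [min_eq_left (by linarith)]
  have hl2 : Tendsto (fun n : ℕ => ∫⁻ x, ENNReal.ofReal (min (Real.exp (t * x)) ((n : ℝ) + 1))
      ∂(ν : Measure ℝ)) atTop (nhds (ENNReal.ofReal (L t))) := by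
    refine (ENNReal.tendsto_ofReal hto).congr fun n => ?_
    rw [ofReal_integral_eq_lintegral_ofReal (hgi _ (hM n) _) (ae_of_all _ (hb _ (hM n)))]
  have heq := tendsto_nhds_unique hl hl2
  rw [integral_eq_lintegral_of_nonneg_ae (ae_of_all _ fun x => (Real.exp_pos _).le)
    (by fun_prop), heq, ENNReal.toReal_ofReal hL0]

lemma aux_tight (C : ℝ) : IsTightMeasureSet {μ : Measure ℝ | ∃ ρ : ProbabilityMeasure ℝ,
    ((∀ t : ℝ, Integrable (fun x => Real.exp (t * x)) (ρ : Measure ℝ)) ∧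
      ∫ x, Real.exp (1 * x) ∂(ρ : Measure ℝ) ≤ C ∧
      ∫ x, Real.exp (-1 * x) ∂(ρ : Measure ℝ) ≤ C) ∧ (ρ : Measure ℝ) = μ} := by
  rw [isTightMeasureSet_iff_exists_isCompact_measure_compl_le]
  intro ε hε
  -- choose the radius
  obtain ⟨δ, hδ, hδε⟩ : ∃ δ : ℝ, 0 < δ ∧ ENNReal.ofReal δ ≤ ε := by
    rcases eq_or_ne ε ⊤ with rfl | h
    · exact ⟨1, one_pos, le_top⟩
    · exact ⟨ε.toReal, ENNReal.toReal_pos hε.ne' h, by rw [ENNReal.ofReal_toReal h]⟩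
  obtain ⟨R, hR⟩ : ∃ R : ℝ, 2 * C / δ < Real.exp R :=
    (Real.tendsto_exp_atTop.eventually (eventually_gt_atTop _)).exists
  refine ⟨Set.Icc (-R) R, isCompact_Icc, ?_⟩
  rintro _ ⟨ρ, ⟨hi, h1, h2⟩, rfl⟩
  have hi' : Integrable (fun x => Real.exp (1 * x) + Real.exp (-1 * x)) (ρ : Measure ℝ) :=
    (hi 1).add (hi (-1))
  have hmk := mul_meas_ge_le_integral_of_nonneg (μ := (ρ : Measure ℝ))
    (ae_of_all _ fun x => (add_pos (Real.exp_pos (1 * x)) (Real.exp_pos (-1 * x))).le) hi'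
    (Real.exp R)
  rw [integral_add (hi 1) (hi (-1))] at hmk
  have hsub : (Set.Icc (-R) R)ᶜ ⊆
      {x : ℝ | Real.exp R ≤ Real.exp (1 * x) + Real.exp (-1 * x)} := by
    intro x hx
    have e1 := Real.exp_pos (1 * x)
    have e2 := Real.exp_pos (-1 * x)
    simp only [Set.mem_ofPred_eq]
    rcases lt_or_ge x (-R) with h | h
    · have : Real.exp R ≤ Real.exp (-1 * x) := Real.exp_le_exp.2 (by linarith)
      linarith
    · rcases lt_or_ge R x with h' | h'
      · have : Real.exp R ≤ Real.exp (1 * x) := Real.exp_le_exp.2 (by linarith)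
        linarith
      · exact absurd ⟨h, h'⟩ hx
  refine (measure_mono hsub).trans (le_trans ?_ hδε)
  rw [← ENNReal.ofReal_toReal (measure_ne_top (ρ : Measure ℝ) _)]
  apply ENNReal.ofReal_le_ofReal
  have hR' : 2 * C < Real.exp R * δ := by rwa [div_lt_iff₀ hδ] at hR
  have : Real.exp R * ((ρ : Measure ℝ)
      {x : ℝ | Real.exp R ≤ Real.exp (1 * x) + Real.exp (-1 * x)}).toReal ≤ Real.exp R * δ := by
    refine le_trans hmk ?_
    linarith
  exact le_of_mul_le_mul_left this (Real.exp_pos R)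

lemma aux_weak {ι : Type*} (F : Filter ι) (μ : ι → ProbabilityMeasure ℝ)
    (P : ProbabilityMeasure ℝ)
    (hP : ∀ t : ℝ, Integrable (fun x => Real.exp (t * x)) (P : Measure ℝ))
    (hint : ∀ (t : ℝ) i, Integrable (fun x => Real.exp (t * x)) (μ i : Measure ℝ))
    (hL : ∀ t : ℝ, Tendsto (fun i => ∫ x, Real.exp (t * x) ∂(μ i : Measure ℝ)) F
      (nhds (∫ x, Real.exp (t * x) ∂(P : Measure ℝ)))) :
    Tendsto μ F (nhds P) := by
  refine (Filter.tendsto_iff_ultrafilter _ _ _).2 fun U hU => ?_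
  set C := max (∫ x, Real.exp (1 * x) ∂(P : Measure ℝ)) (∫ x, Real.exp (-1 * x) ∂(P : Measure ℝ))
    + 1 with hC
  have hcomp := isCompact_closure_of_isTightMeasureSet (S := {ρ : ProbabilityMeasure ℝ |
    (∀ t : ℝ, Integrable (fun x => Real.exp (t * x)) (ρ : Measure ℝ)) ∧
      ∫ x, Real.exp (1 * x) ∂(ρ : Measure ℝ) ≤ C ∧
      ∫ x, Real.exp (-1 * x) ∂(ρ : Measure ℝ) ≤ C}) (aux_tight C)
  have hev : ∀ᶠ i in (U : Filter ι), μ i ∈ {ρ : ProbabilityMeasure ℝ |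
    (∀ t : ℝ, Integrable (fun x => Real.exp (t * x)) (ρ : Measure ℝ)) ∧
      ∫ x, Real.exp (1 * x) ∂(ρ : Measure ℝ) ≤ C ∧
      ∫ x, Real.exp (-1 * x) ∂(ρ : Measure ℝ) ≤ C} := by
    have a1 := ((hL 1).mono_left hU).eventually_lt_const (u := C)
      (by rw [hC]; linarith [le_max_left (∫ x, Real.exp (1 * x) ∂(P : Measure ℝ)) (∫ x, Real.exp (-1 * x) ∂(P : Measure ℝ))])
    have a2 := ((hL (-1)).mono_left hU).eventually_lt_const (u := C)
      (by rw [hC]; linarith [le_max_right (∫ x, Real.exp (1 * x) ∂(P : Measure ℝ)) (∫ x, Real.exp (-1 * x) ∂(P : Measure ℝ))])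
    filter_upwards [a1, a2] with i h1 h2
    exact ⟨fun t => hint t i, h1.le, h2.le⟩
  obtain ⟨ν, -, hν⟩ := hcomp.ultrafilter_le_nhds (U.map μ)
    (le_principal_iff.2 (mem_of_superset hev fun i hi => subset_closure hi))
  have hν' : Tendsto μ U (nhds ν) := hν
  have hPν : P = ν := Subtype.ext (aux_ext (ν : Measure ℝ) (P : Measure ℝ) hP fun t =>
    (aux_limit U μ ν hν' hint _ (fun t => (hL t).mono_left hU) t).symm)
  rw [hPν]
  exact hν'

lemma aux_uniform {ι : Type*} (F : Filter ι) (μ : ι → ProbabilityMeasure ℝ)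
    (P : ProbabilityMeasure ℝ)
    (hP : ∀ t : ℝ, Integrable (fun x => Real.exp (t * x)) (P : Measure ℝ))
    (hint : ∀ (t : ℝ) i, Integrable (fun x => Real.exp (t * x)) (μ i : Measure ℝ))
    (hL : ∀ t : ℝ, Tendsto (fun i => ∫ x, Real.exp (t * x) ∂(μ i : Measure ℝ)) F
      (nhds (∫ x, Real.exp (t * x) ∂(P : Measure ℝ))))
    (hna : ∀ x : ℝ, (P : Measure ℝ) {x} = 0) (ε : ℝ) (hε : 0 < ε) :
    ∀ᶠ i in F, ∀ s : ℝ, |((μ i : Measure ℝ) (Set.Iic s)).toReal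
      - ((P : Measure ℝ) (Set.Iic s)).toReal| ≤ ε := by
  have hw := aux_weak F μ P hP hint hL
  have hcdf : ∀ (ρ : ProbabilityMeasure ℝ) (s : ℝ),
      ((ρ : Measure ℝ) (Set.Iic s)).toReal = ProbabilityTheory.cdf (ρ : Measure ℝ) s :=
    fun ρ s => (ProbabilityTheory.cdf_eq_real _ _).symm
  simp only [hcdf]
  refine aux_polya (fun i => ProbabilityTheory.cdf (μ i : Measure ℝ))
    (ProbabilityTheory.cdf (P : Measure ℝ)) (fun i => ProbabilityTheory.monotone_cdf _)
    (fun i => ProbabilityTheory.cdf_nonneg _) (fun i => ProbabilityTheory.cdf_le_one _)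
    (ProbabilityTheory.monotone_cdf _) (aux_cdf_continuous _ hna)
    (ProbabilityTheory.cdf_nonneg _) (ProbabilityTheory.cdf_le_one _)
    (ProbabilityTheory.tendsto_cdf_atBot _) (ProbabilityTheory.tendsto_cdf_atTop _) ?_ ε hε
  intro x
  have := ProbabilityMeasure.tendsto_measure_of_null_frontier_of_tendsto' hw (E := Set.Iic x)
    (by rw [frontier_Iic]; exact hna x)
  have := (ENNReal.tendsto_toReal (measure_ne_top (P : Measure ℝ) _)).comp this
  simpa only [Function.comp_def, hcdf] using this

/-- The filter of events of asymptotically full probability. -/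
def auxFilter {Ω : Type*} [MeasurableSpace Ω] (ℙ : Measure Ω) : Filter (ℕ × Ω) where
  sets := {S | Tendsto (fun n => ℙ {ω | (n, ω) ∉ S}) atTop (nhds 0)}
  univ_sets := by simp
  sets_of_superset := by
    intro S T hS hST
    refine tendsto_of_tendsto_of_tendsto_of_le_of_le tendsto_const_nhds hS (fun _ => zero_le)
      fun n => measure_mono fun ω hω h => hω (hST h)
  inter_sets := by
    intro S T hS hT
    have h := Tendsto.add hS hT
    rw [add_zero] at h
    refine tendsto_of_tendsto_of_tendsto_of_le_of_le tendsto_const_nhds h (fun _ => zero_le)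
      fun n => (measure_mono ?_).trans (measure_union_le _ _)
    intro ω hω
    by_contra hc
    simp only [Set.mem_union, Set.mem_ofPred_eq, not_or, not_not] at hc
    exact hω ⟨hc.1, hc.2⟩

lemma mem_auxFilter {Ω : Type*} [MeasurableSpace Ω] (ℙ : Measure Ω) (S : Set (ℕ × Ω)) :
    S ∈ auxFilter ℙ ↔ Tendsto (fun n => ℙ {ω | (n, ω) ∉ S}) atTop (nhds 0) := Iff.rfl

/-- Lemma A.2, second part: under the Laplace-transform convergence hypotheses of
Lemma A.1, if the limit measure `P` is atomless then the cumulative distribution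
functions of the random measures `Q n` converge to that of `P` uniformly over ℝ,
in probability. -/
theorem laplace_conv_implies_uniform_cdf_conv_in_probability
    {Ω : Type*} [MeasurableSpace Ω] (ℙ : Measure Ω) [IsProbabilityMeasure ℙ]
    (P : Measure ℝ) [IsProbabilityMeasure P]
    (hPint : ∀ t : ℝ, Integrable (fun x => Real.exp (t * x)) P)
    (L : ℝ → ℝ) (hL : ∀ t, L t = ∫ x, Real.exp (t * x) ∂P)
    (Q : ℕ → Ω → Measure ℝ) (hQprob : ∀ n ω, IsProbabilityMeasure (Q n ω))
    (hQmeas : ∀ (n : ℕ) (g : ℝ → ℝ), Measurable g → (∃ C, ∀ x, |g x| ≤ C) →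
      Measurable (fun ω => ∫ x, g x ∂(Q n ω)))
    (hQint : ∀ (t : ℝ) (n : ℕ) (ω : Ω), Integrable (fun x => Real.exp (t * x)) (Q n ω))
    (hQLmeas : ∀ (t : ℝ) (n : ℕ), Measurable (fun ω => ∫ x, Real.exp (t * x) ∂(Q n ω)))
    (hconv : ∀ t : ℝ, ∀ ε > (0 : ℝ),
      Tendsto (fun n => ℙ {ω | ε < |(∫ x, Real.exp (t * x) ∂(Q n ω)) - L t|})
        atTop (nhds 0))
    (hnoatoms : ∀ x : ℝ, P {x} = 0) :
    ∀ ε > (0 : ℝ),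
      Tendsto
        (fun n => ℙ {ω | ε < ⨆ s : ℝ, |((Q n ω) (Set.Iic s)).toReal - (P (Set.Iic s)).toReal|})
        atTop (nhds 0) := by
  intro ε hε
  have main := aux_uniform (auxFilter ℙ)
    (fun p => (⟨Q p.1 p.2, hQprob p.1 p.2⟩ : ProbabilityMeasure ℝ))
    (⟨P, inferInstance⟩ : ProbabilityMeasure ℝ) hPint (fun t p => hQint t p.1 p.2) ?_ hnoatoms ε hε
  · have h := (mem_auxFilter ℙ _).1 main
    refine tendsto_of_tendsto_of_tendsto_of_le_of_le tendsto_const_nhds h (fun _ => zero_le)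
      fun n => measure_mono ?_
    intro ω hω hc
    exact absurd (ciSup_le hc) (not_le.2 hω)
  · intro t
    rw [Metric.tendsto_nhds]
    intro δ hδ
    refine (mem_auxFilter ℙ _).2 ?_
    refine tendsto_of_tendsto_of_tendsto_of_le_of_le tendsto_const_nhds
      (hconv t (δ / 2) (by positivity)) (fun _ => zero_le) fun n => measure_mono ?_
    intro ω hω
    have h2 : δ ≤ |(∫ x, Real.exp (t * x) ∂(Q n ω)) - ∫ x, Real.exp (t * x) ∂P| :=
      not_lt.1 hω
    simp only [Set.mem_ofPred_eq, hL]
    linarith
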